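/- Let w ∈ [1,γ] and k ∈ ℕ. Then γᵏ w γ⁻ᵏ ∈ [1,γ], and the following identities hold in Γ₊ (interpreting ⟨1⟩ as the identity of Γ₊): (a) ⟨γ⟩ = ⟨γ^{k+1} w⁻¹ γ^{-k}⟩⟨γᵏ w γ⁻ᵏ⟩; (b) ⟨γ⟩ = ⟨γ^{k+1} w γ^{-(k+1)}⟩⟨γ^{k+1} w⁻¹ γ^{-k}⟩; (c) ⟨γ⟩⟨γᵏ w γ⁻ᵏ⟩ = ⟨γ^{k+1} w γ^{-(k+1)}⟩⟨γ⟩. -/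

import Mathlib

/-!
The set of reflections is closed under conjugation, so reflection length is a class function.
Hence, if `u * v = γ` with `ℓ(u) + ℓ(v) = ℓ(γ)`, both factors lie in `[1,γ]`: the complement
`u⁻¹ * γ` of `u` is `v`, and the complement `v⁻¹ * γ = v⁻¹ * u * v` of `v` is conjugate to `u`. Every such
factorization therefore gives `⟨γ⟩ = ⟨u⟩⟨v⟩` in `Γ₊` (`pgen_eq_mul`).

Identities (a) and (b) are the instances `γ = (γ^(k+1) w⁻¹ γ^(-k)) (γ^k w γ^(-k))` and
`γ = (γ^(k+1) w γ^(-(k+1))) (γ^(k+1) w⁻¹ γ^(-k))`, whose factors are conjugate to `w` and to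
`w⁻¹ * γ`. Identity (c) follows by substituting (b) for `⟨γ⟩` on the left and regrouping with (a).
-/

variable {B : Type*} {W : Type*} [Group W] {M : CoxeterMatrix B}

/-- The reflection length of `w`: the least `k` such that `w` is a product of `k`
reflections (conjugates of simple reflections). -/
noncomputable def rlen (cs : CoxeterSystem M W) (w : W) : ℕ :=
  sInf {k | ∃ l : List W, (∀ t ∈ l, cs.IsReflection t) ∧ l.length = k ∧ l.prod = w}

/-- The reflection (absolute) order on `W`: `u ≤ w` iff `ℓ(w) = ℓ(u) + ℓ(u⁻¹w)`. -/
def rle (cs : CoxeterSystem M W) (u w : W) : Prop :=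
  rlen cs w = rlen cs u + rlen cs (u⁻¹ * w)

/-- A Coxeter element: a conjugate of a product of all the simple reflections,
each occurring exactly once, in some order. -/
def IsCoxeterElement [Fintype B] (cs : CoxeterSystem M W) (γ : W) : Prop :=
  ∃ (v : W) (l : List B), l.Nodup ∧ (∀ i : B, i ∈ l) ∧ γ = v * cs.wordProd l * v⁻¹

/-- The generating set of the poset group/monoid: the interval `[1,γ]` minus the identity. -/
abbrev NCGen (cs : CoxeterSystem M W) (γ : W) : Type _ :=
  {w : W // w ≠ 1 ∧ rle cs w γ}

/-- The defining relations of the positive monoid `Γ₊(W,γ)`: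
`⟨w₁⟩⟨w₂⟩ = ⟨w₃⟩` whenever `w₁w₂ = w₃` in `W` and `ℓ(w₁) + ℓ(w₂) = ℓ(w₃)`. -/
def posRels (cs : CoxeterSystem M W) (γ : W) :
    FreeMonoid (NCGen cs γ) → FreeMonoid (NCGen cs γ) → Prop :=
  fun x y => ∃ w₁ w₂ w₃ : NCGen cs γ,
    x = FreeMonoid.of w₁ * FreeMonoid.of w₂ ∧ y = FreeMonoid.of w₃ ∧
    (w₁ : W) * (w₂ : W) = (w₃ : W) ∧
    rlen cs (w₁ : W) + rlen cs (w₂ : W) = rlen cs (w₃ : W)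

/-- The positive monoid `Γ₊(W,γ)`, presented by the generators `⟨w⟩`, `w ∈ [1,γ] \ {1}`,
and the relations `posRels`. -/
abbrev PosMonoid (cs : CoxeterSystem M W) (γ : W) := PresentedMonoid (posRels cs γ)

open Classical in
/-- The generator `⟨w⟩` of `Γ₊(W,γ)` for `w ∈ [1,γ]`, interpreting `⟨1⟩` as the
identity of the monoid (and defaulting to the identity off the interval). -/
noncomputable def pgen (cs : CoxeterSystem M W) (γ : W) (w : W) : PosMonoid cs γ :=
  if h : w ≠ 1 ∧ rle cs w γ then PresentedMonoid.of (posRels cs γ) ⟨w, h⟩ else 1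


lemma exists_reflection_list_conj (cs : CoxeterSystem M W) (g w : W) (k : ℕ)
    (h : ∃ l : List W, (∀ t ∈ l, cs.IsReflection t) ∧ l.length = k ∧ l.prod = w) :
    ∃ l : List W, (∀ t ∈ l, cs.IsReflection t) ∧ l.length = k ∧ l.prod = g * w * g⁻¹ := by
  obtain ⟨l, hl, hk, hp⟩ := h
  refine ⟨l.map (MulAut.conj g), ?_, by simpa using hk, ?_⟩
  · intro t ht
    obtain ⟨s, hs, rfl⟩ := List.mem_map.1 ht
    simpa using (hl s hs).conj g
  · rw [← map_list_prod, hp, MulAut.conj_apply]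

lemma rlen_conj (cs : CoxeterSystem M W) (g w : W) : rlen cs (g * w * g⁻¹) = rlen cs w := by
  unfold rlen
  congr 1
  ext k
  refine ⟨fun h => ?_, exists_reflection_list_conj cs g w k⟩
  simpa [mul_assoc] using exists_reflection_list_conj cs g⁻¹ _ k h

lemma rlen_one (cs : CoxeterSystem M W) : rlen cs 1 = 0 :=
  Nat.sInf_eq_zero.2 (Or.inl ⟨[], by simp⟩)

/-- The value `0` is never the junk value of `sInf`: the simple reflections generate `W`, so every
element is a product of reflections. -/
lemma eq_one_of_rlen_eq_zero (cs : CoxeterSystem M W) {w : W} (h : rlen cs w = 0) : w = 1 := by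
  rcases Nat.sInf_eq_zero.1 h with ⟨l, -, hl, hp⟩ | h
  · rw [← hp, List.length_eq_zero_iff.1 hl, List.prod_nil]
  · obtain ⟨ω, rfl⟩ := cs.wordProd_surjective w
    refine absurd (show ω.length ∈ (∅ : Set ℕ) from h ▸ ⟨ω.map cs.simple, ?_, by simp, rfl⟩)
      (Set.notMem_empty _)
    intro t ht
    obtain ⟨i, -, rfl⟩ := List.mem_map.1 ht
    exact cs.isReflection_simple i

lemma rle_left (cs : CoxeterSystem M W) {γ u v : W} (h : u * v = γ)
    (hl : rlen cs u + rlen cs v = rlen cs γ) : rle cs u γ := by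
  unfold rle
  rw [← hl, ← h, inv_mul_cancel_left]

lemma rle_right (cs : CoxeterSystem M W) {γ u v : W} (h : u * v = γ)
    (hl : rlen cs u + rlen cs v = rlen cs γ) : rle cs v γ := by
  have hc : rlen cs (v⁻¹ * γ) = rlen cs u := by
    simpa [← h, mul_assoc] using rlen_conj cs v⁻¹ u
  unfold rle
  rw [hc, ← hl, add_comm]

lemma pgen_one (cs : CoxeterSystem M W) (γ : W) : pgen cs γ 1 = 1 := by
  simp [pgen]

/-- Every length-additive factorization `γ = u * v` lifts to `Γ₊`, including the degenerate cases
where a factor is trivial. -/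
lemma pgen_eq_mul (cs : CoxeterSystem M W) {γ u v : W} (h : u * v = γ)
    (hl : rlen cs u + rlen cs v = rlen cs γ) : pgen cs γ γ = pgen cs γ u * pgen cs γ v := by
  by_cases hu : u = 1
  · subst hu
    rw [pgen_one, one_mul, ← h, one_mul]
  by_cases hv : v = 1
  · subst hv
    rw [pgen_one, mul_one, ← h, mul_one]
  have hγ1 : γ ≠ 1 := by
    rintro rfl
    rw [rlen_one] at hl
    exact hu (eq_one_of_rlen_eq_zero cs (by omega))
  have hu' : u ≠ 1 ∧ rle cs u γ := ⟨hu, rle_left cs h hl⟩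
  have hv' : v ≠ 1 ∧ rle cs v γ := ⟨hv, rle_right cs h hl⟩
  have hγ' : γ ≠ 1 ∧ rle cs γ γ := ⟨hγ1, by simp [rle, rlen_one]⟩
  rw [pgen, pgen, pgen, dif_pos hu', dif_pos hv', dif_pos hγ']
  exact ((Con.eq _).2 (ConGen.Rel.of _ _
    ⟨⟨u, hu'⟩, ⟨v, hv'⟩, ⟨γ, hγ'⟩, rfl, rfl, h, hl⟩)).symm

/-- Brady's Corollary 5.3: for `w ∈ [1,γ]` and `k ∈ ℕ`, `γᵏwγ⁻ᵏ ∈ [1,γ]` and the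
identities (a) `⟨γ⟩ = ⟨γ^{k+1}w⁻¹γ^{-k}⟩⟨γᵏwγ⁻ᵏ⟩`,
(b) `⟨γ⟩ = ⟨γ^{k+1}wγ^{-(k+1)}⟩⟨γ^{k+1}w⁻¹γ^{-k}⟩`,
(c) `⟨γ⟩⟨γᵏwγ⁻ᵏ⟩ = ⟨γ^{k+1}wγ^{-(k+1)}⟩⟨γ⟩` hold in `Γ₊` (with `⟨1⟩` the identity). -/
theorem gamma_power_identities [Fintype B] [Fintype W] (cs : CoxeterSystem M W) (γ : W)
    (hγ : IsCoxeterElement cs γ) (w : W) (hw : rle cs w γ) (k : ℕ) :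
    rle cs (γ ^ k * w * (γ ^ k)⁻¹) γ ∧
    pgen cs γ γ =
      pgen cs γ (γ ^ (k + 1) * w⁻¹ * (γ ^ k)⁻¹) * pgen cs γ (γ ^ k * w * (γ ^ k)⁻¹) ∧
    pgen cs γ γ =
      pgen cs γ (γ ^ (k + 1) * w * (γ ^ (k + 1))⁻¹) *
        pgen cs γ (γ ^ (k + 1) * w⁻¹ * (γ ^ k)⁻¹) ∧
    pgen cs γ γ * pgen cs γ (γ ^ k * w * (γ ^ k)⁻¹) =
      pgen cs γ (γ ^ (k + 1) * w * (γ ^ (k + 1))⁻¹) * pgen cs γ γ := by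
  set x := γ ^ k * w * (γ ^ k)⁻¹ with hx
  set y := γ ^ (k + 1) * w⁻¹ * (γ ^ k)⁻¹ with hy
  set z := γ ^ (k + 1) * w * (γ ^ (k + 1))⁻¹ with hz
  have hlx : rlen cs x = rlen cs w := rlen_conj cs _ _
  have hlz : rlen cs z = rlen cs w := rlen_conj cs _ _
  have hly : rlen cs y = rlen cs (w⁻¹ * γ) := by
    have hyc : y = γ ^ (k + 1) * (w⁻¹ * γ) * (γ ^ (k + 1))⁻¹ := by
      rw [hy, pow_succ]
      group
    rw [hyc, rlen_conj]
  have hyx : y * x = γ := by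
    rw [hx, hy, pow_succ']
    group
  have hzy : z * y = γ := by
    rw [hz, hy, pow_succ']
    group
  have hw' : rlen cs γ = rlen cs w + rlen cs (w⁻¹ * γ) := hw
  have hlyx : rlen cs y + rlen cs x = rlen cs γ := by omega
  have hlzy : rlen cs z + rlen cs y = rlen cs γ := by omega
  have ha := pgen_eq_mul cs hyx hlyx
  have hb := pgen_eq_mul cs hzy hlzy
  refine ⟨rle_right cs hyx hlyx, ha, hb, ?_⟩
  calc pgen cs γ γ * pgen cs γ x
      = pgen cs γ z * (pgen cs γ y * pgen cs γ x) := by rw [hb, mul_assoc]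
    _ = pgen cs γ z * pgen cs γ γ := by rw [← ha]
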